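/- (Strong completeness) For all sets of formulas Φ ∪ {ψ} ⊆ L_⟹: if Φ ⊨ ψ (every information state of every in-model that supports all formulas in Φ supports ψ), then Φ ⊢ ψ in the Hilbert system for InqML_⟹. -/

import Mathlib

/-- Formulas of the inquisitive modal language `L_⟹`. -/
inductive Form (P : Type) : Type
  | atom : P → Form P
  | bot : Form P
  | and : Form P → Form P → Form P
  | impl : Form P → Form P → Form P
  | idisj : Form P → Form P → Form P
  | yields : Form P → Form P → Form P

/-- An inhabited neighborhood model (in-model). -/
structure InModel (P : Type) where
  W : Type
  ne : Nonempty W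
  Nb : W → Set (Set W)
  nb_nonempty : ∀ w, ∀ s ∈ Nb w, s.Nonempty
  V : W → P → Bool

/-- Support of a formula at an information state. -/
def support {P : Type} (M : InModel P) : Form P → Set M.W → Prop
  | .atom p, s => ∀ w ∈ s, M.V w p = true
  | .bot, s => s = ∅
  | .and φ ψ, s => support M φ s ∧ support M ψ s
  | .impl φ ψ, s => ∀ t : Set M.W, t ⊆ s → support M φ t → support M ψ t
  | .idisj φ ψ, s => support M φ s ∨ support M ψ s
  | .yields φ ψ, s => ∀ w ∈ s, ∀ t ∈ M.Nb w, support M φ t → support M ψ t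

/-- Truth at a world: support at the corresponding singleton state. -/
def truth {P : Type} (M : InModel P) (w : M.W) (φ : Form P) : Prop :=
  support M φ {w}

/-- A formula is truth-conditional if support at any state amounts to truth at
every world of the state. -/
def TruthConditional {P : Type} (φ : Form P) : Prop :=
  ∀ (M : InModel P) (s : Set M.W), support M φ s ↔ ∀ w ∈ s, truth M w φ

/-- Logical equivalence: same supporting states in every in-model. -/
def EquivF {P : Type} (φ ψ : Form P) : Prop :=
  ∀ (M : InModel P) (s : Set M.W), support M φ s ↔ support M ψ s

def Form.neg {P : Type} (φ : Form P) : Form P := .impl φ .bot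
def Form.top {P : Type} : Form P := Form.neg .bot
def Form.or {P : Type} (φ ψ : Form P) : Form P := Form.neg (.and (Form.neg φ) (Form.neg ψ))
def Form.box {P : Type} (φ : Form P) : Form P := .yields Form.top φ
def Form.dia {P : Type} (φ : Form P) : Form P := Form.neg (.yields φ .bot)
def Form.quest {P : Type} (φ : Form P) : Form P := .idisj φ (Form.neg φ)

/-- Declaratives: formulas where `⩔` occurs only within the scope of `⟹`. -/
inductive IsDecl {P : Type} : Form P → Prop
  | atom (p : P) : IsDecl (.atom p)
  | bot : IsDecl .bot
  | and {α β : Form P} : IsDecl α → IsDecl β → IsDecl (.and α β)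
  | impl {α β : Form P} : IsDecl α → IsDecl β → IsDecl (.impl α β)
  | yields (φ ψ : Form P) : IsDecl (.yields φ ψ)

/-- Derivability in the Hilbert system for `InqML_⟹`: a standard axiomatization
of intuitionistic propositional logic (with `⩔` as intuitionistic disjunction),
the inquisitive axioms `DDN` and `Split` for declaratives, the modal axioms
`Trans`, `RConj`, `LDisj`, and the rules of modus ponens and conditional
necessitation. -/
inductive Deriv {P : Type} : Form P → Prop
  -- intuitionistic propositional axioms
  | ax_k {φ ψ : Form P} : Deriv (.impl φ (.impl ψ φ))
  | ax_s {φ ψ χ : Form P} :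
      Deriv (.impl (.impl φ (.impl ψ χ)) (.impl (.impl φ ψ) (.impl φ χ)))
  | and_intro {φ ψ : Form P} : Deriv (.impl φ (.impl ψ (.and φ ψ)))
  | and_elim_left {φ ψ : Form P} : Deriv (.impl (.and φ ψ) φ)
  | and_elim_right {φ ψ : Form P} : Deriv (.impl (.and φ ψ) ψ)
  | idisj_intro_left {φ ψ : Form P} : Deriv (.impl φ (.idisj φ ψ))
  | idisj_intro_right {φ ψ : Form P} : Deriv (.impl ψ (.idisj φ ψ))
  | idisj_elim {φ ψ χ : Form P} :
      Deriv (.impl (.impl φ χ) (.impl (.impl ψ χ) (.impl (.idisj φ ψ) χ)))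
  | exfalso {φ : Form P} : Deriv (.impl .bot φ)
  -- inquisitive axioms for declaratives
  | ddn {α : Form P} : IsDecl α → Deriv (.impl (Form.neg (Form.neg α)) α)
  | split {α φ ψ : Form P} : IsDecl α →
      Deriv (.impl (.impl α (.idisj φ ψ)) (.idisj (.impl α φ) (.impl α ψ)))
  -- modal axioms
  | trans {φ ψ χ : Form P} :
      Deriv (.impl (.and (.yields φ ψ) (.yields ψ χ)) (.yields φ χ))
  | rconj {φ ψ χ : Form P} :
      Deriv (.impl (.and (.yields φ ψ) (.yields φ χ)) (.yields φ (.and ψ χ)))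
  | ldisj {φ ψ χ : Form P} :
      Deriv (.impl (.and (.yields φ χ) (.yields ψ χ)) (.yields (.idisj φ ψ) χ))
  -- rules
  | mp {φ ψ : Form P} : Deriv (.impl φ ψ) → Deriv φ → Deriv ψ
  | cn {φ ψ : Form P} : Deriv (.impl φ ψ) → Deriv (.yields φ ψ)

def bigAnd {P : Type} : List (Form P) → Form P
  | [] => Form.top
  | [φ] => φ
  | φ :: rest => .and φ (bigAnd rest)

/-- `Φ ⊢ ψ`: for some `φ₁, …, φₙ ∈ Φ` (possibly `n = 0`, with `⊤` as
antecedent), the formula `(φ₁ ∧ … ∧ φₙ) → ψ` is derivable. -/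
def SDeriv {P : Type} (Φ : Set (Form P)) (ψ : Form P) : Prop :=
  ∃ l : List (Form P), (∀ φ ∈ l, φ ∈ Φ) ∧ Deriv (.impl (bigAnd l) ψ)

/-- `Φ ⊨ ψ`: every information state of every in-model supporting all formulas
of `Φ` supports `ψ`. -/
def Entails {P : Type} (Φ : Set (Form P)) (ψ : Form P) : Prop :=
  ∀ (M : InModel P) (s : Set M.W), (∀ φ ∈ Φ, support M φ s) → support M ψ s

namespace InqProof

variable {P : Type}

/-- Provable implication, used as a preorder. -/
def Le (a b : Form P) : Prop := Deriv (.impl a b)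

theorem Le.mp' {a b : Form P} (h : Le a b) (ha : Deriv a) : Deriv b := Deriv.mp h ha

theorem Le.refl (a : Form P) : Le a a :=
  Deriv.mp (Deriv.mp (Deriv.ax_s (φ := a) (ψ := .impl a a) (χ := a)) Deriv.ax_k) Deriv.ax_k

theorem Le.of_deriv {a b : Form P} (h : Deriv b) : Le a b := Deriv.mp Deriv.ax_k h

theorem Le.app {c a b : Form P} (h : Le c (.impl a b)) (h' : Le c a) : Le c b :=
  Deriv.mp (Deriv.mp Deriv.ax_s h) h'

theorem Le.trans {a b c : Form P} (h : Le a b) (h' : Le b c) : Le a c :=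
  Le.app (Le.of_deriv h') h

theorem Le.fst {a b : Form P} : Le (.and a b) a := Deriv.and_elim_left
theorem Le.snd {a b : Form P} : Le (.and a b) b := Deriv.and_elim_right
theorem Le.inl {a b : Form P} : Le a (.idisj a b) := Deriv.idisj_intro_left
theorem Le.inr {a b : Form P} : Le b (.idisj a b) := Deriv.idisj_intro_right
theorem Le.exf {a : Form P} : Le .bot a := Deriv.exfalso

theorem Le.pair {c a b : Form P} (h : Le c a) (h' : Le c b) : Le c (.and a b) :=
  Le.app (Le.trans h Deriv.and_intro) h'

theorem Le.case {a b c : Form P} (h : Le a c) (h' : Le b c) : Le (.idisj a b) c :=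
  Deriv.mp (Deriv.mp Deriv.idisj_elim h) h'

theorem Le.curry {c a b : Form P} (h : Le (.and c a) b) : Le c (.impl a b) := by
  have h1 : Le c (.impl a (.and c a)) := Deriv.and_intro
  have h2 : Le c (.impl a (.impl (.and c a) b)) := Le.of_deriv (Le.of_deriv h)
  exact Le.app (Le.trans h2 Deriv.ax_s) h1

theorem Le.uncurry {c a b : Form P} (h : Le c (.impl a b)) : Le (.and c a) b :=
  Le.app (Le.trans Le.fst h) Le.snd

theorem Le.comm {a b : Form P} : Le (.and a b) (.and b a) := Le.pair Le.snd Le.fst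

theorem Le.swap {c a b : Form P} (h : Le c (.impl a b)) : Le a (.impl c b) :=
  Le.curry (Le.trans Le.comm (Le.uncurry h))

theorem top_deriv : Deriv (Form.top : Form P) := Le.refl Form.bot

theorem Le.top {a : Form P} : Le a Form.top := Le.of_deriv top_deriv

theorem Le.imp_mono {a a' b b' : Form P} (h : Le a' a) (h' : Le b b') :
    Le (.impl a b) (.impl a' b') :=
  Le.curry (Le.trans (Le.app Le.fst (Le.trans Le.snd h)) h')

theorem Le.and_mono {a a' b b' : Form P} (h : Le a a') (h' : Le b b') :
    Le (.and a b) (.and a' b') := Le.pair (Le.trans Le.fst h) (Le.trans Le.snd h')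

theorem Le.or_mono {a a' b b' : Form P} (h : Le a a') (h' : Le b b') :
    Le (.idisj a b) (.idisj a' b') := Le.case (Le.trans h Le.inl) (Le.trans h' Le.inr)

theorem Le.distrib {a b c : Form P} :
    Le (.and a (.idisj b c)) (.idisj (.and a b) (.and a c)) := by
  refine Le.trans Le.comm (Le.uncurry (Le.case ?_ ?_))
  · exact Le.curry (Le.trans Le.comm Le.inl)
  · exact Le.curry (Le.trans Le.comm Le.inr)

theorem decl_top : IsDecl (Form.top : Form P) := IsDecl.impl IsDecl.bot IsDecl.bot

/-! Normal forms -/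

inductive DNF : Form P → Prop
  | decl {a : Form P} : IsDecl a → DNF a
  | idisj {a b : Form P} : DNF a → DNF b → DNF (.idisj a b)

def NF (φ : Form P) : Prop := ∃ a, DNF a ∧ Le φ a ∧ Le a φ

theorem NF.congr {φ ψ : Form P} (h : NF φ) (h1 : Le φ ψ) (h2 : Le ψ φ) : NF ψ := by
  obtain ⟨a, ha, h3, h4⟩ := h
  exact ⟨a, ha, Le.trans h2 h3, Le.trans h4 h1⟩

theorem NF.decl {φ : Form P} (h : IsDecl φ) : NF φ := ⟨φ, .decl h, Le.refl _, Le.refl _⟩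

theorem NF.idisj {φ ψ : Form P} (h : NF φ) (h' : NF ψ) : NF (.idisj φ ψ) := by
  obtain ⟨a, ha, h3, h4⟩ := h
  obtain ⟨b, hb, h5, h6⟩ := h'
  exact ⟨.idisj a b, .idisj ha hb, Le.or_mono h3 h5, Le.or_mono h4 h6⟩

theorem DNF.and_decl {a b : Form P} (ha : IsDecl a) (hb : DNF b) : NF (.and a b) := by
  induction hb with
  | decl hb => exact NF.decl (.and ha hb)
  | idisj _ _ ih1 ih2 =>
    refine (NF.idisj ih1 ih2).congr ?_ Le.distrib
    exact Le.case (Le.and_mono (Le.refl _) Le.inl) (Le.and_mono (Le.refl _) Le.inr)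

theorem DNF.and {a b : Form P} (ha : DNF a) (hb : DNF b) : NF (.and a b) := by
  induction ha with
  | decl ha => exact DNF.and_decl ha hb
  | idisj _ _ ih1 ih2 =>
    refine (NF.idisj ih1 ih2).congr ?_ ?_
    · exact Le.case (Le.and_mono Le.inl (Le.refl _)) (Le.and_mono Le.inr (Le.refl _))
    · exact Le.trans Le.comm (Le.trans Le.distrib (Le.or_mono Le.comm Le.comm))

theorem NF.and {φ ψ : Form P} (h : NF φ) (h' : NF ψ) : NF (.and φ ψ) := by
  obtain ⟨a, ha, h3, h4⟩ := h
  obtain ⟨b, hb, h5, h6⟩ := h'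
  exact (DNF.and ha hb).congr (Le.and_mono h4 h6) (Le.and_mono h3 h5)

theorem DNF.impl_decl {a b : Form P} (ha : IsDecl a) (hb : DNF b) : NF (.impl a b) := by
  induction hb with
  | decl hb => exact NF.decl (.impl ha hb)
  | idisj _ _ ih1 ih2 =>
    refine (NF.idisj ih1 ih2).congr ?_ (Deriv.split ha)
    exact Le.case (Le.imp_mono (Le.refl _) Le.inl) (Le.imp_mono (Le.refl _) Le.inr)

theorem DNF.impl {a b : Form P} (ha : DNF a) (hb : DNF b) : NF (.impl a b) := by
  induction ha with
  | decl ha => exact DNF.impl_decl ha hb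
  | idisj _ _ ih1 ih2 =>
    refine (NF.and ih1 ih2).congr ?_ ?_
    · exact Le.swap (Le.case (Le.swap Le.fst) (Le.swap Le.snd))
    · exact Le.pair (Le.imp_mono Le.inl (Le.refl _)) (Le.imp_mono Le.inr (Le.refl _))

theorem NF.impl {φ ψ : Form P} (h : NF φ) (h' : NF ψ) : NF (.impl φ ψ) := by
  obtain ⟨a, ha, h3, h4⟩ := h
  obtain ⟨b, hb, h5, h6⟩ := h'
  exact (DNF.impl ha hb).congr (Le.imp_mono h3 h6) (Le.imp_mono h4 h5)

theorem nf (φ : Form P) : NF φ := by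
  induction φ with
  | atom p => exact NF.decl (.atom p)
  | bot => exact NF.decl .bot
  | and _ _ h h' => exact NF.and h h'
  | impl _ _ h h' => exact NF.impl h h'
  | idisj _ _ h h' => exact NF.idisj h h'
  | yields a b => exact NF.decl (.yields a b)

theorem le_of_decl {φ χ : Form P} (h : ∀ β, IsDecl β → Le β φ → Le β χ) : Le φ χ := by
  obtain ⟨a, ha, h1, h2⟩ := nf φ
  refine Le.trans h1 ?_
  clear h1
  induction ha with
  | decl ha => exact h _ ha h2
  | idisj _ _ ih1 ih2 =>
    exact Le.case (ih1 (Le.trans Le.inl h2)) (ih2 (Le.trans Le.inr h2))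

/-! The Kripke model of declaratives, giving the disjunction property -/

def forces : Form P → Form P → Prop
  | .atom p, α => Le α (.atom p)
  | .bot, α => Le α .bot
  | .and φ ψ, α => forces φ α ∧ forces ψ α
  | .impl φ ψ, α => ∀ β, IsDecl β → Le β α → forces φ β → forces ψ β
  | .idisj φ ψ, α => forces φ α ∨ forces ψ α
  | .yields φ ψ, α => Le α (.yields φ ψ)

theorem forces_mono {φ α β : Form P} (h : Le β α) (hf : forces φ α) : forces φ β := by
  induction φ with
  | atom p => exact Le.trans h hf
  | bot => exact Le.trans h hf
  | and _ _ ih ih' => exact ⟨ih hf.1, ih' hf.2⟩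
  | impl _ _ _ _ => exact fun γ hγ hl => hf γ hγ (Le.trans hl h)
  | idisj _ _ ih ih' => exact hf.imp ih ih'
  | yields _ _ => exact Le.trans h hf

theorem forces_of_bot {φ α : Form P} (h : Le α .bot) : forces φ α := by
  induction φ generalizing α with
  | atom p => exact Le.trans h Le.exf
  | bot => exact h
  | and _ _ ih ih' => exact ⟨ih h, ih' h⟩
  | impl _ _ _ ih' => exact fun γ hγ hl _ => ih' (Le.trans hl h)
  | idisj _ _ ih ih' => exact Or.inl (ih h)
  | yields _ _ => exact Le.trans h Le.exf

theorem forces_decl {δ α : Form P} (hδ : IsDecl δ) (hα : IsDecl α) :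
    forces δ α ↔ Le α δ := by
  induction hδ generalizing α with
  | atom p => exact Iff.rfl
  | bot => exact Iff.rfl
  | and _ _ ih ih' =>
    constructor
    · intro h
      exact Le.pair ((ih hα).1 h.1) ((ih' hα).1 h.2)
    · intro h
      exact ⟨(ih hα).2 (Le.trans h Le.fst), (ih' hα).2 (Le.trans h Le.snd)⟩
  | impl h1 h2 ih ih' =>
    constructor
    · intro h
      exact Le.curry ((ih' (.and hα h1)).1
        (h _ (.and hα h1) Le.fst ((ih (.and hα h1)).2 Le.snd)))
    · intro h β hβ hl hf
      exact (ih' hβ).2 (Le.app (Le.trans hl h) ((ih hβ).1 hf))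
  | yields _ _ => exact Iff.rfl

theorem forces_sound {φ : Form P} (h : Deriv φ) : ∀ α, IsDecl α → forces φ α := by
  induction h with
  | ax_k =>
    intro α _ β _ _ h γ _ hl _
    exact forces_mono hl h
  | ax_s =>
    intro α _ β _ _ h γ _ hl h' δ hδ hl' h''
    exact h δ hδ (Le.trans hl' hl) h'' δ hδ (Le.refl _) (h' δ hδ hl' h'')
  | and_intro =>
    intro α _ β _ _ h γ _ hl h'
    exact ⟨forces_mono hl h, h'⟩
  | and_elim_left => exact fun α _ β _ _ h => h.1
  | and_elim_right => exact fun α _ β _ _ h => h.2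
  | idisj_intro_left => exact fun α _ β _ _ h => Or.inl h
  | idisj_intro_right => exact fun α _ β _ _ h => Or.inr h
  | idisj_elim =>
    intro α _ β _ _ h γ _ hl h' δ hδ hl' h''
    rcases h'' with h'' | h''
    · exact h δ hδ (Le.trans hl' hl) h''
    · exact h' δ hδ hl' h''
  | exfalso => exact fun α _ β _ _ h => forces_of_bot h
  | ddn hd =>
    intro α hα
    exact (forces_decl (.impl (.impl (.impl hd .bot) .bot) hd) hα).2
      (Le.of_deriv (Deriv.ddn hd))
  | @split δ φ ψ hd =>
    intro α _ β hβ _ h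
    have h1 := h (.and β δ) (.and hβ hd) Le.fst ((forces_decl hd (.and hβ hd)).2 Le.snd)
    rcases h1 with h1 | h1
    · exact Or.inl fun γ hγ hl hf => forces_mono (Le.pair hl ((forces_decl hd hγ).1 hf)) h1
    · exact Or.inr fun γ hγ hl hf => forces_mono (Le.pair hl ((forces_decl hd hγ).1 hf)) h1
  | trans =>
    intro α hα
    exact (forces_decl (.impl (.and (.yields _ _) (.yields _ _)) (.yields _ _)) hα).2
      (Le.of_deriv Deriv.trans)
  | rconj =>
    intro α hα
    exact (forces_decl (.impl (.and (.yields _ _) (.yields _ _)) (.yields _ _)) hα).2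
      (Le.of_deriv Deriv.rconj)
  | ldisj =>
    intro α hα
    exact (forces_decl (.impl (.and (.yields _ _) (.yields _ _)) (.yields _ _)) hα).2
      (Le.of_deriv Deriv.ldisj)
  | mp _ _ ih ih' => exact fun α hα => ih α hα α hα (Le.refl _) (ih' α hα)
  | cn h _ =>
    intro α hα
    exact (forces_decl (.yields _ _) hα).2 (Le.of_deriv (Deriv.cn h))

theorem forces_of_le {φ α : Form P} (hα : IsDecl α) (h : Le α φ) : forces φ α :=
  forces_sound h α hα α hα (Le.refl _) ((forces_decl hα hα).2 (Le.refl _))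

theorem le_of_forces {φ α : Form P} (hα : IsDecl α) (h : forces φ α) : Le α φ := by
  induction φ generalizing α with
  | atom p => exact h
  | bot => exact h
  | and _ _ ih ih' => exact Le.pair (ih hα h.1) (ih' hα h.2)
  | impl φ ψ ih ih' =>
    refine Le.swap (le_of_decl fun β hβ hl => Le.swap (Le.curry ?_))
    exact ih' (.and hα hβ) (h _ (.and hα hβ) Le.fst
      (forces_of_le (.and hα hβ) (Le.trans Le.snd hl)))
  | idisj _ _ ih ih' =>
    rcases h with h | h
    · exact Le.trans (ih hα h) Le.inl
    · exact Le.trans (ih' hα h) Le.inr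
  | yields _ _ => exact h

theorem disj_prop {α φ ψ : Form P} (hα : IsDecl α) (h : Le α (.idisj φ ψ)) :
    Le α φ ∨ Le α ψ :=
  (forces_of_le hα h : forces φ α ∨ forces ψ α).imp (le_of_forces hα) (le_of_forces hα)

/-! Filters -/

structure Good (R : Form P → Form P → Prop) : Prop where
  le : ∀ {a b}, Le a b → R a b
  trans : ∀ {a b c}, R a b → R b c → R a c
  pair : ∀ {a b c}, R a b → R a c → R a (.and b c)
  case : ∀ {a b c}, R a c → R b c → R (.idisj a b) c

structure Filt (R : Form P → Form P → Prop) (F : Set (Form P)) : Prop where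
  top : Form.top ∈ F
  and : ∀ {a b}, a ∈ F → b ∈ F → Form.and a b ∈ F
  up : ∀ {a b}, a ∈ F → R a b → b ∈ F

theorem good_le : Good (Le : Form P → Form P → Prop) :=
  ⟨id, Le.trans, Le.pair, Le.case⟩

theorem Filt.to_le {R : Form P → Form P → Prop} (hR : Good R) {F : Set (Form P)}
    (hF : Filt R F) : Filt Le F := ⟨hF.top, hF.and, fun h h' => hF.up h (hR.le h')⟩

theorem Filt.add {R : Form P → Form P → Prop} (hR : Good R) {F : Set (Form P)}
    (hF : Filt R F) (χ : Form P) : Filt R {θ | ∃ δ ∈ F, R (.and δ χ) θ} := by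
  refine ⟨⟨_, hF.top, hR.le Le.top⟩, ?_, ?_⟩
  · rintro a b ⟨δ, hδ, h⟩ ⟨ε, hε, h'⟩
    refine ⟨_, hF.and hδ hε, hR.pair (hR.trans (hR.le ?_) h) (hR.trans (hR.le ?_) h')⟩
    · exact Le.and_mono Le.fst (Le.refl _)
    · exact Le.and_mono Le.snd (Le.refl _)
  · rintro a b ⟨δ, hδ, h⟩ h'
    exact ⟨δ, hδ, hR.trans h h'⟩

theorem exists_max {R : Form P → Form P → Prop} (hR : Good R) {F : Set (Form P)}
    (hF : Filt R F) {ψ : Form P} (hψ : ψ ∉ F) :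
    ∃ D, F ⊆ D ∧ Filt R D ∧ ψ ∉ D ∧ ∀ χ, χ ∉ D → ∃ δ ∈ D, R (.and δ χ) ψ := by
  obtain ⟨D, hFD, hD⟩ := zorn_subset_nonempty {D | Filt R D ∧ ψ ∉ D} (by
    intro c hc hch hne
    refine ⟨⋃₀ c, ⟨⟨?_, ?_, ?_⟩, ?_⟩, fun s hs => Set.subset_sUnion_of_mem hs⟩
    · obtain ⟨s, hs⟩ := hne
      exact ⟨s, hs, (hc hs).1.top⟩
    · rintro a b ⟨s, hs, ha⟩ ⟨t, ht, hb⟩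
      rcases hch.total hs ht with h | h
      · exact ⟨t, ht, (hc ht).1.and (h ha) hb⟩
      · exact ⟨s, hs, (hc hs).1.and ha (h hb)⟩
    · rintro a b ⟨s, hs, ha⟩ h
      exact ⟨s, hs, (hc hs).1.up ha h⟩
    · rintro ⟨s, hs, h⟩
      exact (hc hs).2 h) F ⟨hF, hψ⟩
  refine ⟨D, hFD, hD.prop.1, hD.prop.2, fun χ hχ => ?_⟩
  by_contra hcon
  have hsub : D ⊆ {θ | ∃ δ ∈ D, R (.and δ χ) θ} := fun θ hθ => ⟨θ, hθ, hR.le Le.fst⟩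
  have := hD.le_of_ge (y := {θ | ∃ δ ∈ D, R (.and δ χ) θ})
    ⟨hD.prop.1.add hR χ, hcon⟩ hsub
  exact hχ (this ⟨_, hD.prop.1.top, hR.le Le.snd⟩)

theorem exists_prime {R : Form P → Form P → Prop} (hR : Good R) {F : Set (Form P)}
    (hF : Filt R F) {ψ : Form P} (hψ : ψ ∉ F) :
    ∃ D, F ⊆ D ∧ Filt R D ∧ ψ ∉ D ∧ ∀ a b, Form.idisj a b ∈ D → a ∈ D ∨ b ∈ D := by
  obtain ⟨D, h1, h2, h3, h4⟩ := exists_max hR hF hψ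
  refine ⟨D, h1, h2, h3, fun a b hab => ?_⟩
  by_contra! hcon
  obtain ⟨δ, hδ, h⟩ := h4 a hcon.1
  obtain ⟨ε, hε, h'⟩ := h4 b hcon.2
  apply h3
  refine h2.up (h2.and (h2.and hδ hε) hab) (hR.trans (hR.le Le.distrib) (hR.case ?_ ?_))
  · exact hR.trans (hR.le (Le.and_mono Le.fst (Le.refl _))) h
  · exact hR.trans (hR.le (Le.and_mono Le.snd (Le.refl _))) h'



structure IsWorld (w : Set (Form P)) : Prop where
  filt : Filt Le w
  cons : Form.bot ∉ w
  compl : ∀ φ, φ ∉ w → Form.neg φ ∈ w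

theorem lindenbaum {D : Set (Form P)} (hD : Filt Le D) {α : Form P} (hα : IsDecl α)
    (h : α ∉ D) : ∃ w, IsWorld w ∧ D ⊆ w ∧ α ∉ w := by
  have hb : Form.bot ∉ {θ | ∃ δ ∈ D, Le (.and δ (Form.neg α)) θ} := by
    rintro ⟨δ, hδ, hl⟩
    exact h (hD.up hδ (Le.trans (Le.curry hl) (Deriv.ddn hα)))
  obtain ⟨w, h1, h2, h3, h4⟩ := exists_max good_le (hD.add good_le (Form.neg α)) hb
  refine ⟨w, ⟨h2, h3, fun χ hχ => ?_⟩, fun δ hδ => h1 ⟨δ, hδ, Le.fst⟩, fun hw => ?_⟩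
  · obtain ⟨δ, hδ, hl⟩ := h4 χ hχ
    exact h2.up hδ (Le.curry hl)
  · have hn : Form.neg α ∈ w := h1 ⟨_, hD.top, Le.snd⟩
    exact h3 (h2.up (h2.and hn hw) (Le.uncurry (Le.refl _)))

theorem prime_resolves {D : Set (Form P)} (hD : Filt Le D)
    (hp : ∀ a b, Form.idisj a b ∈ D → a ∈ D ∨ b ∈ D) {φ : Form P} (h : φ ∈ D) :
    ∃ α ∈ D, IsDecl α ∧ Le α φ := by
  obtain ⟨a, ha, h1, h2⟩ := nf φ
  have had : a ∈ D := hD.up h h1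
  clear h1 h
  induction ha with
  | decl ha => exact ⟨_, had, ha, h2⟩
  | idisj _ _ ih1 ih2 =>
    rcases hp _ _ had with h | h
    · exact ih1 (Le.trans Le.inl h2) h
    · exact ih2 (Le.trans Le.inr h2) h

abbrev World (P : Type) := {w : Set (Form P) // IsWorld w}

/-- The theory of a state: consequences of the declaratives true throughout it. -/
def Th (s : Set (World P)) (φ : Form P) : Prop :=
  ∃ α, IsDecl α ∧ (∀ w ∈ s, α ∈ w.1) ∧ Le α φ

theorem Th.le {s : Set (World P)} {φ ψ : Form P} (h : Th s φ) (hl : Le φ ψ) : Th s ψ := by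
  obtain ⟨α, h1, h2, h3⟩ := h
  exact ⟨α, h1, h2, Le.trans h3 hl⟩

theorem Th.pair {s : Set (World P)} {φ ψ : Form P} (h : Th s φ) (h' : Th s ψ) :
    Th s (.and φ ψ) := by
  obtain ⟨α, h1, h2, h3⟩ := h
  obtain ⟨β, h4, h5, h6⟩ := h'
  exact ⟨.and α β, .and h1 h4, fun w hw => w.2.filt.and (h2 w hw) (h5 w hw),
    Le.and_mono h3 h6⟩

theorem Th.mono {s t : Set (World P)} (hts : t ⊆ s) {φ : Form P} (h : Th s φ) : Th t φ := by
  obtain ⟨α, h1, h2, h3⟩ := h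
  exact ⟨α, h1, fun w hw => h2 w (hts hw), h3⟩

theorem Th.mem {s : Set (World P)} {φ : Form P} (h : Th s φ) {w : World P} (hw : w ∈ s) :
    φ ∈ w.1 := by
  obtain ⟨α, h1, h2, h3⟩ := h
  exact w.2.filt.up (h2 w hw) h3

/-- The state of a theory. -/
def St (D : Set (Form P)) : Set (World P) := {w | ∀ α, IsDecl α → α ∈ D → α ∈ w.1}

theorem th_st {D : Set (Form P)} (hD : Filt Le D)
    (hp : ∀ a b, Form.idisj a b ∈ D → a ∈ D ∨ b ∈ D) (φ : Form P) : Th (St D) φ ↔ φ ∈ D := by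
  constructor
  · rintro ⟨α, h1, h2, h3⟩
    refine hD.up ?_ h3
    by_contra hcon
    obtain ⟨w, hw, hs, hn⟩ := lindenbaum hD h1 hcon
    exact hn (h2 ⟨w, hw⟩ fun β _ hβ => hs hβ)
  · intro h
    obtain ⟨α, h1, h2, h3⟩ := prime_resolves hD hp h
    exact ⟨α, h2, fun w hw => hw α h2 h1, h3⟩

theorem st_nonempty {D : Set (Form P)} (hD : Filt Le D) {ψ : Form P} (h : ψ ∉ D) :
    (St D).Nonempty := by
  obtain ⟨w, hw, hs, _⟩ := lindenbaum hD .bot fun hb => h (hD.up hb Le.exf)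
  exact ⟨⟨w, hw⟩, fun β _ hβ => hs hβ⟩

def canonNb (w : World P) : Set (Set (World P)) :=
  {t | t.Nonempty ∧ ∀ φ ψ, Form.yields φ ψ ∈ w.1 → Th t φ → Th t ψ}

open Classical in
noncomputable def canon (P : Type) (hne : Nonempty (World P)) : InModel P where
  W := World P
  ne := hne
  Nb := canonNb
  nb_nonempty := fun _ _ h => h.1
  V := fun w p => decide (Form.atom p ∈ w.1)

theorem good_yields (w : World P) : Good (fun a b => Form.yields a b ∈ w.1) := by
  have hw := w.2.filt
  refine ⟨fun h => hw.up hw.top (Le.of_deriv (Deriv.cn h)), ?_, ?_, ?_⟩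
  · exact fun h h' => hw.up (hw.and h h') Deriv.trans
  · exact fun h h' => hw.up (hw.and h h') Deriv.rconj
  · exact fun h h' => hw.up (hw.and h h') Deriv.ldisj

open Classical in
theorem support_canon (hne : Nonempty (World P)) (φ : Form P) (s : Set (World P)) :
    support (canon P hne) φ s ↔ Th s φ := by
  induction φ generalizing s with
  | atom p =>
    constructor
    · intro h
      exact ⟨.atom p, .atom p, fun w hw => of_decide_eq_true (h w hw), Le.refl _⟩
    · intro h w hw
      exact decide_eq_true (h.mem hw)
  | bot =>
    constructor
    · intro h
      have h : s = ∅ := h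
      exact ⟨.bot, .bot, fun w hw => by simp [h] at hw, Le.refl _⟩
    · intro h
      exact Set.eq_empty_iff_forall_notMem.2 fun w hw => w.2.cons (h.mem hw)
  | and φ ψ ih ih' =>
    constructor
    · intro h
      exact Th.pair ((ih s).1 h.1) ((ih' s).1 h.2)
    · intro h
      exact ⟨(ih s).2 (h.le Le.fst), (ih' s).2 (h.le Le.snd)⟩
  | idisj φ ψ ih ih' =>
    constructor
    · rintro (h | h)
      · exact ((ih s).1 h).le Le.inl
      · exact ((ih' s).1 h).le Le.inr
    · rintro ⟨α, h1, h2, h3⟩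
      rcases disj_prop h1 h3 with h | h
      · exact Or.inl ((ih s).2 ⟨α, h1, h2, h⟩)
      · exact Or.inr ((ih' s).2 ⟨α, h1, h2, h⟩)
  | impl φ ψ ih ih' =>
    constructor
    · intro h
      have key : ∀ β, IsDecl β → Le β φ → Th s (.impl β ψ) := by
        intro β hβ hl
        have h1 := (ih' {w | w ∈ s ∧ β ∈ w.1}).1 (h _ (fun w hw => hw.1)
          ((ih _).2 ⟨β, hβ, fun w hw => hw.2, hl⟩))
        obtain ⟨γ, hγ, h2, h3⟩ := h1
        refine ⟨.impl β γ, .impl hβ hγ, fun w hw => ?_, Le.imp_mono (Le.refl _) h3⟩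
        by_cases hb : β ∈ w.1
        · exact w.2.filt.up (h2 w ⟨hw, hb⟩) Deriv.ax_k
        · exact w.2.filt.up (w.2.compl β hb) (Le.imp_mono (Le.refl _) Le.exf)
      obtain ⟨a, ha, h1, h2⟩ := nf φ
      suffices hs : Th s (.impl a ψ) from hs.le (Le.imp_mono h1 (Le.refl _))
      clear h1
      induction ha with
      | decl ha => exact key _ ha h2
      | idisj _ _ i1 i2 =>
        exact (Th.pair (i1 (Le.trans Le.inl h2)) (i2 (Le.trans Le.inr h2))).le
          (Le.swap (Le.case (Le.swap Le.fst) (Le.swap Le.snd)))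
    · intro h t hts ht
      exact (ih' t).2 ((Th.pair (h.mono hts) ((ih t).1 ht)).le (Le.uncurry (Le.refl _)))
  | yields φ ψ ih ih' =>
    constructor
    · intro h
      refine ⟨.yields φ ψ, .yields _ _, fun w hw => ?_, Le.refl _⟩
      by_contra hcon
      have hR := good_yields w
      have hF : Filt (fun a b => Form.yields a b ∈ w.1) {χ | Form.yields φ χ ∈ w.1} :=
        ⟨hR.le Le.top, hR.pair, hR.trans⟩
      obtain ⟨D, h1, h2, h3, h4⟩ := exists_prime hR hF (ψ := ψ) hcon
      have hD := h2.to_le hR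
      have hn : St D ∈ (canon P hne).Nb w :=
        ⟨st_nonempty hD h3, fun a b hab ha =>
          (th_st hD h4 b).2 (h2.up ((th_st hD h4 a).1 ha) hab)⟩
      have := h w hw _ hn ((ih _).2 ((th_st hD h4 φ).2 (h1 (hR.le (Le.refl _)))))
      exact h3 ((th_st hD h4 ψ).1 ((ih' _).1 this))
    · intro h w hw t ht hφ
      exact (ih' t).2 (ht.2 φ ψ (h.mem hw) ((ih t).1 hφ))

theorem bigAnd_le {l : List (Form P)} {φ : Form P} (h : φ ∈ l) : Le (bigAnd l) φ := by
  induction l with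
  | nil => simp at h
  | cons a l ih =>
    cases l with
    | nil =>
      simp only [List.mem_singleton] at h
      subst h
      exact Le.refl _
    | cons b l =>
      rcases List.mem_cons.1 h with h | h
      · subst h
        exact Le.fst
      · exact Le.trans Le.snd (ih h)

theorem le_bigAnd {l : List (Form P)} {c : Form P} (h : ∀ φ ∈ l, Le c φ) :
    Le c (bigAnd l) := by
  induction l with
  | nil => exact Le.top
  | cons a l ih =>
    cases l with
    | nil => exact h a (by simp)
    | cons b l => exact Le.pair (h a (by simp)) (ih fun φ hφ => h φ (List.mem_cons_of_mem _ hφ))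

theorem filt_sderiv (Φ : Set (Form P)) : Filt Le {θ | SDeriv Φ θ} := by
  refine ⟨⟨[], by simp, Le.top⟩, ?_, ?_⟩
  · rintro a b ⟨l, hl, h⟩ ⟨m, hm, h'⟩
    refine ⟨l ++ m, ?_, Le.pair (Le.trans (le_bigAnd ?_) h) (Le.trans (le_bigAnd ?_) h')⟩
    · intro φ hφ
      exact (List.mem_append.1 hφ).elim (hl φ) (hm φ)
    · exact fun φ hφ => bigAnd_le (List.mem_append_left _ hφ)
    · exact fun φ hφ => bigAnd_le (List.mem_append_right _ hφ)
  · rintro a b ⟨l, hl, h⟩ h'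
    exact ⟨l, hl, Le.trans h h'⟩

end InqProof

/-- strong completeness of the Hilbert system for `InqML_⟹`. -/
theorem strong_completeness {P : Type} (Φ : Set (Form P)) (ψ : Form P) :
    Entails Φ ψ → SDeriv Φ ψ := by
  intro hE
  by_contra hcon
  obtain ⟨D, h1, h2, h3, h4⟩ :=
    InqProof.exists_prime InqProof.good_le (InqProof.filt_sderiv Φ) (ψ := ψ) hcon
  have hne : Nonempty (InqProof.World P) := (InqProof.st_nonempty h2 h3).to_type
  have := hE (InqProof.canon P hne) (InqProof.St D) fun φ hφ =>
    (InqProof.support_canon hne φ _).2 ((InqProof.th_st h2 h4 φ).2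
      (h1 ⟨[φ], by simpa using hφ, InqProof.Le.refl _⟩))
  exact h3 ((InqProof.th_st h2 h4 ψ).1 ((InqProof.support_canon hne ψ _).1 this))
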